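/- arXiv:2107.08242 — 4 statements merged into one kernel-verified Lean document; each statement's English description precedes it below -/
import Mathlib

section
/- Let f : ℝ → ℝ be a Schwartz function and ℓ > 0. Then ∫_{ℝ} ∫_{ℝ} (f(x + y) − f(x))² / (cosh(y/ℓ) − 1) dx dy ≤ (4π²/3) ℓ³ ∫_{ℝ} f′(x)² dx. -/
open Real MeasureTheory

/-- Jensen's inequality for the square on the unit interval. -/
theorem sq_intervalIntegral_le_intervalIntegral_sq {h : ℝ → ℝ} (hh : Continuous h) :
    (∫ t in (0 : ℝ)..1, h t) ^ 2 ≤ ∫ t in (0 : ℝ)..1, h t ^ 2 := by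
  set m := ∫ t in (0 : ℝ)..1, h t with hm
  have h0 : 0 ≤ ∫ t in (0 : ℝ)..1, (h t - m) ^ 2 :=
    intervalIntegral.integral_nonneg zero_le_one fun t _ => sq_nonneg _
  have h1 : ∫ t in (0 : ℝ)..1, (h t - m) ^ 2
      = (∫ t in (0 : ℝ)..1, h t ^ 2) - 2 * m * m + m ^ 2 := by
    have hexp : ∀ t, (h t - m) ^ 2 = h t ^ 2 - 2 * m * h t + m ^ 2 := fun t => by ring
    simp_rw [hexp]
    rw [intervalIntegral.integral_add, intervalIntegral.integral_sub,
      intervalIntegral.integral_const_mul, ← hm]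
    · simp
    all_goals exact Continuous.intervalIntegrable (by fun_prop) _ _
  nlinarith

/-- A translation increment is controlled by the mean of the squared derivative. -/
theorem sq_sub_le_intervalIntegral_sq_deriv {f : ℝ → ℝ} (hf : ContDiff ℝ 1 f) (x y : ℝ) :
    (f (x + y) - f x) ^ 2 ≤ ∫ t in (0 : ℝ)..1, (y * deriv f (x + t * y)) ^ 2 := by
  have hc : Continuous (deriv f) := hf.continuous_deriv le_rfl
  have hd : ∀ z, HasDerivAt f (deriv f z) z := fun z =>
    (hf.differentiable one_ne_zero z).hasDerivAt
  have hftc : ∫ t in (0 : ℝ)..1, y * deriv f (x + t * y) = f (x + y) - f x := by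
    have := intervalIntegral.integral_eq_sub_of_hasDerivAt (a := 0) (b := 1)
      (f := fun t : ℝ => f (x + t * y)) (f' := fun t => y * deriv f (x + t * y))
      (fun t _ => by
        have hi : HasDerivAt (fun t : ℝ => x + t * y) y t := by
          simpa using ((hasDerivAt_id t).mul_const y).const_add x
        simpa [mul_comm, Function.comp_def] using (hd (x + t * y)).comp t hi)
      (Continuous.intervalIntegrable (by fun_prop) _ _)
    simpa using this
  rw [← hftc]
  exact sq_intervalIntegral_le_intervalIntegral_sq (by fun_prop)

/-- The `L²` modulus of continuity of a `C¹` function whose derivative is square integrable. -/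
theorem integral_sq_translate_sub_le {f : ℝ → ℝ} (hf : ContDiff ℝ 1 f)
    (hint : Integrable fun x => deriv f x ^ 2) (y : ℝ) :
    ∫ x, (f (x + y) - f x) ^ 2 ≤ y ^ 2 * ∫ x, deriv f x ^ 2 := by
  have hc : Continuous (deriv f) := hf.continuous_deriv le_rfl
  have hcf : Continuous f := hf.continuous
  have hI : 0 ≤ ∫ x, deriv f x ^ 2 := integral_nonneg fun x => sq_nonneg _
  rw [integral_eq_lintegral_of_nonneg_ae (.of_forall fun x => sq_nonneg _)
    (by fun_prop : Continuous fun x => (f (x + y) - f x) ^ 2).aestronglyMeasurable]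
  refine ENNReal.toReal_le_of_le_ofReal (by positivity) ?_
  calc ∫⁻ x, ENNReal.ofReal ((f (x + y) - f x) ^ 2)
      ≤ ∫⁻ x, ∫⁻ t in Set.Ioc (0 : ℝ) 1,
          ENNReal.ofReal ((y * deriv f (x + t * y)) ^ 2) := by
        refine lintegral_mono fun x => ?_
        rw [← ofReal_integral_eq_lintegral_ofReal _ (.of_forall fun t => sq_nonneg _)]
        · rw [← intervalIntegral.integral_of_le zero_le_one]
          exact ENNReal.ofReal_le_ofReal (sq_sub_le_intervalIntegral_sq_deriv hf x y)
        · exact (Continuous.integrableOn_Icc (by fun_prop)).mono_set Set.Ioc_subset_Icc_self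
    _ = ∫⁻ t in Set.Ioc (0 : ℝ) 1, ∫⁻ x,
          ENNReal.ofReal ((y * deriv f (x + t * y)) ^ 2) := by
        refine lintegral_lintegral_swap (Measurable.aemeasurable ?_)
        refine (Continuous.measurable ?_).ennreal_ofReal
        fun_prop
    _ = ∫⁻ t in Set.Ioc (0 : ℝ) 1, ENNReal.ofReal (y ^ 2 * ∫ x, deriv f x ^ 2) := by
        refine lintegral_congr fun t => ?_
        rw [lintegral_add_right_eq_self (fun x => ENNReal.ofReal ((y * deriv f x) ^ 2)) (t * y),
          ← integral_const_mul,
          ofReal_integral_eq_lintegral_ofReal (hint.const_mul _)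
            (.of_forall fun x => by positivity)]
        simp_rw [mul_pow]
    _ = ENNReal.ofReal (y ^ 2 * ∫ x, deriv f x ^ 2) := by simp

/-- Expansion of `y² / (cosh y - 1)` as an exponential series. -/
theorem hasSum_sq_div_cosh_sub_one {y : ℝ} (hy : 0 < y) :
    HasSum (fun n : ℕ => 2 * n * (y ^ 2 * exp (-(n * y)))) (y ^ 2 / (cosh y - 1)) := by
  have hr : exp (-y) < 1 := by simpa using hy
  have hpos := exp_pos (-y)
  have h := (hasSum_coe_mul_geometric_of_norm_lt_one (r := exp (-y))
    (by rwa [norm_of_nonneg hpos.le])).mul_left (2 * y ^ 2)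
  have hne : 1 - exp (-y) ≠ 0 := by linarith
  have hcosh : cosh y - 1 = (1 - exp (-y)) ^ 2 / (2 * exp (-y)) := by
    have hinv : exp y = (exp (-y))⁻¹ := by rw [exp_neg, inv_inv]
    rw [cosh_eq, hinv]
    field_simp
    ring
  have hval : y ^ 2 / (cosh y - 1) = 2 * y ^ 2 * (exp (-y) / (1 - exp (-y)) ^ 2) := by
    rw [hcosh]
    field_simp
  have hterm : (fun n : ℕ => 2 * n * (y ^ 2 * exp (-(n * y))))
      = fun n : ℕ => 2 * y ^ 2 * (n * exp (-y) ^ n) := by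
    funext n
    rw [← exp_nat_mul, mul_neg]
    ring
  rwa [hval, hterm]

theorem integrableOn_sq_mul_exp_neg_nat_mul {n : ℕ} (hn : 0 < n) :
    IntegrableOn (fun y : ℝ => y ^ 2 * exp (-(n * y))) (Set.Ioi 0) := by
  have := integrableOn_rpow_mul_exp_neg_mul_rpow (s := 2) (p := 1) (b := n)
    (by norm_num) one_pos (by exact_mod_cast hn)
  simpa using this

theorem integral_sq_mul_exp_neg_nat_mul {n : ℕ} (hn : 0 < n) :
    ∫ y in Set.Ioi (0 : ℝ), y ^ 2 * exp (-(n * y)) = 2 / (n : ℝ) ^ 3 := by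
  have hn' : (0 : ℝ) < n := by exact_mod_cast hn
  have h := integral_rpow_mul_exp_neg_mul_Ioi (a := 3) (r := n) (by norm_num) hn'
  have hG : Gamma 3 = 2 := by simp
  have hp : (1 / (n : ℝ)) ^ (3 : ℝ) = 1 / (n : ℝ) ^ 3 := by
    rw [show (3 : ℝ) = (3 : ℕ) by norm_num, rpow_natCast, one_div_pow]
  rw [hG, hp, show (3 : ℝ) - 1 = (2 : ℕ) by norm_num] at h
  simp_rw [rpow_natCast] at h
  rw [h]
  ring

theorem lintegral_Ioi_sq_div_cosh_sub_one :
    ∫⁻ y in Set.Ioi (0 : ℝ), ENNReal.ofReal (y ^ 2 / (cosh y - 1))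
      = ENNReal.ofReal (2 * π ^ 2 / 3) := by
  have hterm : ∀ n : ℕ, ∫⁻ y in Set.Ioi (0 : ℝ),
      ENNReal.ofReal (2 * n * (y ^ 2 * exp (-(n * y))))
        = ENNReal.ofReal (4 * (1 / (n : ℝ) ^ 2)) := by
    intro n
    rcases n.eq_zero_or_pos with rfl | hn
    · simp
    · rw [← ofReal_integral_eq_lintegral_ofReal
        ((integrableOn_sq_mul_exp_neg_nat_mul hn).const_mul _)
        (.of_forall fun y => by positivity), integral_const_mul,
        integral_sq_mul_exp_neg_nat_mul hn]
      congr 1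
      field_simp
      norm_num
  calc ∫⁻ y in Set.Ioi (0 : ℝ), ENNReal.ofReal (y ^ 2 / (cosh y - 1))
      = ∫⁻ y in Set.Ioi (0 : ℝ), ∑' n : ℕ,
          ENNReal.ofReal (2 * n * (y ^ 2 * exp (-(n * y)))) := by
        refine setLIntegral_congr_fun measurableSet_Ioi fun y hy => ?_
        have h := hasSum_sq_div_cosh_sub_one hy
        rw [← h.tsum_eq, ENNReal.ofReal_tsum_of_nonneg (fun n => by positivity) h.summable]
    _ = ∑' n : ℕ, ENNReal.ofReal (4 * (1 / (n : ℝ) ^ 2)) := by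
        rw [lintegral_tsum fun n => by fun_prop]
        simp_rw [hterm]
    _ = ENNReal.ofReal (2 * π ^ 2 / 3) := by
        have h := hasSum_zeta_two.mul_left 4
        rw [← ENNReal.ofReal_tsum_of_nonneg (fun n => by positivity) h.summable, h.tsum_eq]
        congr 1
        ring

theorem lintegral_sq_div_cosh_sub_one :
    ∫⁻ y : ℝ, ENNReal.ofReal (y ^ 2 / (cosh y - 1)) = ENNReal.ofReal (4 * π ^ 2 / 3) := by
  have hneg : ∫⁻ y in Set.Iio (0 : ℝ), ENNReal.ofReal (y ^ 2 / (cosh y - 1))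
      = ENNReal.ofReal (2 * π ^ 2 / 3) := by
    rw [← lintegral_Ioi_sq_div_cosh_sub_one,
      ← (Measure.measurePreserving_neg (volume : Measure ℝ)).setLIntegral_comp_preimage_emb
        (MeasurableEquiv.neg ℝ).measurableEmbedding _ (Set.Ioi 0)]
    simp
  rw [← lintegral_add_compl _ (measurableSet_Ioi (a := (0 : ℝ))), Set.compl_Ioi,
    setLIntegral_congr Iio_ae_eq_Iic.symm, hneg, lintegral_Ioi_sq_div_cosh_sub_one,
    ← ENNReal.ofReal_add (by positivity) (by positivity)]
  congr 1
  ring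

theorem sq_div_cosh_sub_one_nonneg (y : ℝ) : 0 ≤ y ^ 2 / (cosh y - 1) :=
  div_nonneg (sq_nonneg _) (sub_nonneg.2 (one_le_cosh y))

theorem integrable_sq_div_cosh_sub_one : Integrable fun y : ℝ => y ^ 2 / (cosh y - 1) := by
  refine ⟨(by fun_prop : Measurable _).aestronglyMeasurable, ?_⟩
  rw [hasFiniteIntegral_iff_ofReal (.of_forall sq_div_cosh_sub_one_nonneg),
    lintegral_sq_div_cosh_sub_one]
  exact ENNReal.ofReal_lt_top

theorem integral_sq_div_cosh_sub_one : ∫ y : ℝ, y ^ 2 / (cosh y - 1) = 4 * π ^ 2 / 3 := by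
  rw [integral_eq_lintegral_of_nonneg_ae (.of_forall sq_div_cosh_sub_one_nonneg)
    integrable_sq_div_cosh_sub_one.aestronglyMeasurable, lintegral_sq_div_cosh_sub_one,
    ENNReal.toReal_ofReal (by positivity)]

theorem strip_jump_form_cosh_sub_one_bound (f : SchwartzMap ℝ ℝ) (ℓ : ℝ) (hℓ : 0 < ℓ) :
    ∫ y : ℝ, ∫ x : ℝ, (f (x + y) - f x) ^ 2 / (Real.cosh (y / ℓ) - 1) ≤
      (4 * π ^ 2 / 3) * ℓ ^ 3 * ∫ x : ℝ, (deriv (⇑f) x) ^ 2 := by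
  have hint : Integrable fun x => deriv f x ^ 2 := by
    simpa using ((SchwartzMap.derivCLM ℝ ℝ f).memLp 2).integrable_sq
  set I := ∫ x : ℝ, (deriv (⇑f) x) ^ 2
  have hden : ∀ y : ℝ, 0 ≤ cosh (y / ℓ) - 1 := fun y => sub_nonneg.2 (one_le_cosh _)
  have hbound : ∀ y : ℝ, ∫ x : ℝ, (f (x + y) - f x) ^ 2 / (cosh (y / ℓ) - 1)
      ≤ ℓ ^ 2 * I * ((y / ℓ) ^ 2 / (cosh (y / ℓ) - 1)) := by
    intro y
    rw [integral_div]
    calc (∫ x : ℝ, (f (x + y) - f x) ^ 2) / (cosh (y / ℓ) - 1)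
        ≤ y ^ 2 * I / (cosh (y / ℓ) - 1) :=
          div_le_div_of_nonneg_right (integral_sq_translate_sub_le (f.smooth 1) hint y) (hden y)
      _ = ℓ ^ 2 * I * ((y / ℓ) ^ 2 / (cosh (y / ℓ) - 1)) := by
          rw [div_pow]
          field_simp
  calc ∫ y : ℝ, ∫ x : ℝ, (f (x + y) - f x) ^ 2 / (cosh (y / ℓ) - 1)
      ≤ ∫ y : ℝ, ℓ ^ 2 * I * ((y / ℓ) ^ 2 / (cosh (y / ℓ) - 1)) :=
        integral_mono_of_nonneg
          (.of_forall fun y => integral_nonneg fun x => div_nonneg (sq_nonneg _) (hden y))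
          ((integrable_sq_div_cosh_sub_one.comp_div hℓ.ne').const_mul _) (.of_forall hbound)
    _ = (4 * π ^ 2 / 3) * ℓ ^ 3 * I := by
        rw [integral_const_mul,
          Measure.integral_comp_div (fun y : ℝ => y ^ 2 / (cosh y - 1)) ℓ,
          integral_sq_div_cosh_sub_one, abs_of_pos hℓ, smul_eq_mul]
        ring
end

section
/- Let f : ℝ → ℝ be a Schwartz function and ℓ > 0. Then ∫_{ℝ} ∫_{ℝ} (f(x + y) − f(x))² / (cosh(y/ℓ) + 1) dx dy ≤ (2π²/3) ℓ³ ∫_{ℝ} f′(x)² dx. -/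
open Real MeasureTheory

/-- The alternating Basel sum `∑ (-1)ⁿ⁺¹ / n² = π² / 12`. -/
lemma hasSum_alternating_one_div_nat_sq :
    HasSum (fun n : ℕ => (-1 : ℝ) ^ (n + 1) / (n : ℝ) ^ 2) (π ^ 2 / 12) := by
  have hz := hasSum_zeta_two
  have he : HasSum (fun k : ℕ => (1 : ℝ) / ((2 * k : ℕ) : ℝ) ^ 2) (π ^ 2 / 24) := by
    have h := hz.mul_left (1 / 4)
    rw [show 1 / 4 * (π ^ 2 / 6) = π ^ 2 / 24 by ring] at h
    refine h.congr_fun fun k => ?_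
    push_cast
    rw [mul_pow, one_div, one_div, one_div, mul_inv]
    norm_num
  have ho : HasSum (fun k : ℕ => (1 : ℝ) / ((2 * k + 1 : ℕ) : ℝ) ^ 2) (π ^ 2 / 8) := by
    have hs : Summable (fun k : ℕ => (1 : ℝ) / ((2 * k + 1 : ℕ) : ℝ) ^ 2) :=
      hz.summable.comp_injective (i := fun k : ℕ => 2 * k + 1) fun a b h => by simpa using h
    have h := (HasSum.even_add_odd (f := fun n : ℕ => (1 : ℝ) / (n : ℝ) ^ 2) he hs.hasSum).unique hz
    convert hs.hasSum using 1
    linarith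
  have h := HasSum.even_add_odd (f := fun n : ℕ => (-1 : ℝ) ^ (n + 1) / (n : ℝ) ^ 2)
    (he.neg.congr_fun fun k => by simp [pow_succ, pow_mul, neg_div])
    (ho.congr_fun fun k => by simp [pow_succ, pow_mul])
  convert h using 1
  ring

lemma hasSum_alternating_mul_exp_neg {y : ℝ} (hy : 0 < y) :
    HasSum (fun n : ℕ => 2 * (-1 : ℝ) ^ (n + 1) * n * rexp (-(n * y))) (1 / (cosh y + 1)) := by
  have h := (hasSum_coe_mul_geometric_of_norm_lt_one (r := -rexp (-y))
    (by simpa using hy)).mul_left (-2)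
  have hval : -2 * (-rexp (-y) / (1 - -rexp (-y)) ^ 2) = 1 / (cosh y + 1) := by
    have := Real.exp_pos y
    have h₁ : 1 - -(rexp y)⁻¹ ≠ 0 := by rw [sub_neg_eq_add]; positivity
    have h₂ : (rexp y + (rexp y)⁻¹) / 2 + 1 ≠ 0 := by positivity
    rw [cosh_eq, Real.exp_neg, mul_div_assoc', div_eq_div_iff (pow_ne_zero 2 h₁) h₂]
    field_simp
    ring
  rw [hval] at h
  refine h.congr_fun fun n => ?_
  rw [neg_pow (rexp (-y)), ← Real.exp_nat_mul, mul_neg]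
  ring

lemma integral_Ioi_sq_mul_exp_neg_mul {r : ℝ} (hr : 0 < r) :
    ∫ y in Set.Ioi (0 : ℝ), y ^ 2 * rexp (-(r * y)) = 2 / r ^ 3 := by
  have h := Real.integral_rpow_mul_exp_neg_mul_Ioi (a := 3) (by norm_num) hr
  rw [show Real.Gamma 3 = 2 by simp] at h
  norm_num at h
  rw [h]
  field_simp

lemma integral_Ioi_sq_div_cosh_add_one :
    ∫ y in Set.Ioi (0 : ℝ), y ^ 2 / (cosh y + 1) = π ^ 2 / 3 := by
  set F : ℕ → ℝ → ℝ := fun n y => 2 * (-1 : ℝ) ^ (n + 1) * n * (y ^ 2 * rexp (-(n * y)))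
  have hint (n : ℕ) : Integrable (F n) (volume.restrict (Set.Ioi 0)) := by
    rcases Nat.eq_zero_or_pos n with rfl | hn
    · simp [F]
    · have hn' : (0 : ℝ) < n := by exact_mod_cast hn
      refine Integrable.const_mul (Integrable.of_integral_ne_zero ?_) _
      rw [integral_Ioi_sq_mul_exp_neg_mul hn']
      positivity
  have hval (n : ℕ) : ∫ y in Set.Ioi (0 : ℝ), F n y = 4 * ((-1 : ℝ) ^ (n + 1) / (n : ℝ) ^ 2) := by
    rcases Nat.eq_zero_or_pos n with rfl | hn
    · simp [F]
    · have hn' : (0 : ℝ) < n := by exact_mod_cast hn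
      simp only [F]
      rw [integral_const_mul, integral_Ioi_sq_mul_exp_neg_mul hn']
      field_simp
      ring
  have hnorm (n : ℕ) : ∫ y in Set.Ioi (0 : ℝ), ‖F n y‖ = 4 * (1 / (n : ℝ) ^ 2) := by
    rcases Nat.eq_zero_or_pos n with rfl | hn
    · simp [F]
    · have hn' : (0 : ℝ) < n := by exact_mod_cast hn
      have (y : ℝ) : ‖F n y‖ = 2 * n * (y ^ 2 * rexp (-(n * y))) := by
        simp [F]
      simp only [this]
      rw [integral_const_mul, integral_Ioi_sq_mul_exp_neg_mul hn']
      field_simp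
      ring
  have hsum := hasSum_integral_of_summable_integral_norm hint
    (by simpa only [hnorm] using hasSum_zeta_two.summable.mul_left 4)
  simp only [hval] at hsum
  have h := hsum.unique (hasSum_alternating_one_div_nat_sq.mul_left 4)
  rw [show π ^ 2 / 3 = 4 * (π ^ 2 / 12) by ring, ← h]
  refine setIntegral_congr_fun measurableSet_Ioi fun y hy => ?_
  have := ((hasSum_alternating_mul_exp_neg hy).mul_left (y ^ 2)).tsum_eq
  rw [div_eq_mul_one_div, ← this]
  refine tsum_congr fun n => ?_
  simp only [F]
  ring

lemma integral_sq_div_cosh_add_one : ∫ y : ℝ, y ^ 2 / (cosh y + 1) = 2 * π ^ 2 / 3 := by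
  have h := integral_comp_abs (f := fun y : ℝ => y ^ 2 / (cosh y + 1))
  simp only [sq_abs, cosh_abs] at h
  rw [h, integral_Ioi_sq_div_cosh_add_one]
  ring

lemma integral_sq_div_cosh_div_add_one {ℓ : ℝ} (hℓ : 0 < ℓ) :
    ∫ y : ℝ, y ^ 2 / (cosh (y / ℓ) + 1) = 2 * π ^ 2 / 3 * ℓ ^ 3 := by
  have h := Measure.integral_comp_div (fun y : ℝ => y ^ 2 / (cosh y + 1)) ℓ
  rw [integral_sq_div_cosh_add_one, abs_of_pos hℓ, smul_eq_mul] at h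
  have h' (y : ℝ) : y ^ 2 / (cosh (y / ℓ) + 1) = ℓ ^ 2 * ((y / ℓ) ^ 2 / (cosh (y / ℓ) + 1)) := by
    field_simp
  simp only [h']
  rw [integral_const_mul, h]
  ring

lemma sq_sub_le_sq_mul_integral_sq_deriv (f : SchwartzMap ℝ ℝ) (x y : ℝ) :
    (f (x + y) - f x) ^ 2 ≤ y ^ 2 * ∫ t in (0 : ℝ)..1, (deriv f (x + t * y)) ^ 2 := by
  have hc : Continuous (deriv f) := (SchwartzMap.derivCLM ℝ ℝ f).continuous
  have hftc : f (x + y) - f x = y * ∫ t in (0 : ℝ)..1, deriv f (x + t * y) := by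
    have hd (t : ℝ) : HasDerivAt (fun t => f (x + t * y)) (deriv f (x + t * y) * y) t := by
      have h : HasDerivAt (fun t => x + t * y) y t := by
        simpa using ((hasDerivAt_id t).mul_const y).const_add x
      exact (f.hasDerivAt (x + t * y)).comp t h
    have := intervalIntegral.integral_eq_sub_of_hasDerivAt (a := 0) (b := 1) (fun t _ => hd t)
      (Continuous.intervalIntegrable (by fun_prop) _ _)
    rw [intervalIntegral.integral_mul_const] at this
    simp only [one_mul, zero_mul, add_zero] at this
    rw [← this, mul_comm]
  rw [hftc, mul_pow]
  gcongr
  rw [intervalIntegral.integral_of_le zero_le_one, intervalIntegral.integral_of_le zero_le_one]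
  have : IsProbabilityMeasure (volume.restrict (Set.Ioc (0 : ℝ) 1)) := ⟨by simp⟩
  have hi {g : ℝ → ℝ} (hg : Continuous g) : Integrable g (volume.restrict (Set.Ioc (0 : ℝ) 1)) :=
    hg.integrableOn_Ioc
  exact ConvexOn.map_integral_le (even_two.convexOn_pow (𝕜 := ℝ)) (by fun_prop) isClosed_univ
    (by simp) (hi (by fun_prop)) (hi (by unfold Function.comp; fun_prop))

/-- The `L²` modulus of continuity is controlled by the derivative. -/
lemma integral_sq_sub_le_sq_mul_integral_sq_deriv (f : SchwartzMap ℝ ℝ) (y : ℝ) :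
    ∫ x : ℝ, (f (x + y) - f x) ^ 2 ≤ y ^ 2 * ∫ x : ℝ, (deriv f x) ^ 2 := by
  have hc : Continuous (deriv f) := (SchwartzMap.derivCLM ℝ ℝ f).continuous
  have hsq : Integrable (fun x => (deriv f x) ^ 2) :=
    ((SchwartzMap.derivCLM ℝ ℝ f).memLp 2 volume).integrable_sq
  have hprod : Integrable (fun p : ℝ × ℝ => (deriv f (p.1 + p.2 * y)) ^ 2)
      (volume.prod (volume.restrict (Set.Ioc (0 : ℝ) 1))) := by
    refine (integrable_prod_iff' (Continuous.aestronglyMeasurable (by fun_prop))).2 ⟨?_, ?_⟩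
    · exact .of_forall fun t => hsq.comp_add_right (t * y)
    · have (t : ℝ) : ∫ x : ℝ, ‖(deriv f (x + t * y)) ^ 2‖ = ∫ x : ℝ, ‖(deriv f x) ^ 2‖ :=
        integral_add_right_eq_self (fun x => ‖(deriv f x) ^ 2‖) (t * y)
      simp only [this]
      exact integrable_const _
  calc ∫ x : ℝ, (f (x + y) - f x) ^ 2
      ≤ ∫ x : ℝ, y ^ 2 * ∫ t in Set.Ioc (0 : ℝ) 1, (deriv f (x + t * y)) ^ 2 := by
        refine integral_mono_of_nonneg (.of_forall fun x => sq_nonneg _)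
          (hprod.integral_prod_left.const_mul _) (.of_forall fun x => ?_)
        have := sq_sub_le_sq_mul_integral_sq_deriv f x y
        rwa [intervalIntegral.integral_of_le zero_le_one] at this
    _ = y ^ 2 * ∫ t in Set.Ioc (0 : ℝ) 1, ∫ x : ℝ, (deriv f (x + t * y)) ^ 2 := by
        rw [integral_const_mul, integral_integral_swap hprod]
    _ = y ^ 2 * ∫ x : ℝ, (deriv f x) ^ 2 := by
        have (t : ℝ) : ∫ x : ℝ, (deriv f (x + t * y)) ^ 2 = ∫ x : ℝ, (deriv f x) ^ 2 :=
          integral_add_right_eq_self (fun x => (deriv f x) ^ 2) (t * y)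
        simp [this]

theorem strip_jump_form_cosh_add_one_bound (f : SchwartzMap ℝ ℝ) (ℓ : ℝ) (hℓ : 0 < ℓ) :
    ∫ y : ℝ, ∫ x : ℝ, (f (x + y) - f x) ^ 2 / (Real.cosh (y / ℓ) + 1) ≤
      (2 * π ^ 2 / 3) * ℓ ^ 3 * ∫ x : ℝ, (deriv (⇑f) x) ^ 2 := by
  have hcosh (y : ℝ) : 0 < cosh (y / ℓ) + 1 := by positivity
  rw [← integral_sq_div_cosh_div_add_one hℓ, ← integral_mul_const]
  refine integral_mono_of_nonneg (.of_forall fun y => integral_nonneg fun x => ?_)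
    (Integrable.mul_const (.of_integral_ne_zero ?_) _) (.of_forall fun y => ?_)
  · exact div_nonneg (sq_nonneg _) (hcosh y).le
  · rw [integral_sq_div_cosh_div_add_one hℓ]
    positivity
  · simp only
    rw [integral_div, div_mul_eq_mul_div]
    exact div_le_div_of_nonneg_right (integral_sq_sub_le_sq_mul_integral_sq_deriv f y) (hcosh y).le
end

section
/- Let f : ℝ → ℝ be a Schwartz function. Then lim_{ℓ → ∞} ∫_{ℝ} ∫_{ℝ} (f(x + y) − f(x))² / (ℓ² (cosh(y/ℓ) − 1)) dx dy = 2 ∫_{ℝ} ∫_{ℝ} (f(x + y) − f(x))² / y² dx dy, and the right-hand side is finite. -/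
open Real MeasureTheory Filter

/-- The square of a Schwartz function decays at least like `(1 + x²)⁻¹`. -/
lemma SchwartzMap.exists_sq_le_mul_inv_one_add_sq (g : SchwartzMap ℝ ℝ) :
    ∃ C : ℝ, 0 ≤ C ∧ ∀ x, g x ^ 2 ≤ C * (1 + x ^ 2)⁻¹ := by
  obtain ⟨A, -, hA⟩ := g.decay 0 0
  obtain ⟨B, -, hB⟩ := g.decay 1 0
  refine ⟨A ^ 2 + B ^ 2, by positivity, fun x => ?_⟩
  have hA' : |g x| ≤ A := by simpa using hA x
  have hB' : |x * g x| ≤ B := by simpa [abs_mul] using hB x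
  have h0 := sq_le_sq' (neg_le_of_abs_le hA') (le_of_abs_le hA')
  have h1 := sq_le_sq' (neg_le_of_abs_le hB') (le_of_abs_le hB')
  rw [← div_eq_mul_inv, le_div_iff₀ (by positivity)]
  nlinarith

/-- Pointwise domination of the squared difference quotient of a Schwartz function. -/
lemma SchwartzMap.exists_sq_sub_div_sq_le (f : SchwartzMap ℝ ℝ) :
    ∃ C : ℝ, ∀ x y : ℝ, (f (x + y) - f x) ^ 2 / y ^ 2 ≤
      C * ((1 + x ^ 2)⁻¹ * (1 + y ^ 2)⁻¹ + (1 + (x + y) ^ 2)⁻¹ * (1 + y ^ 2)⁻¹) := by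
  obtain ⟨A, hA0, hA⟩ := f.exists_sq_le_mul_inv_one_add_sq
  obtain ⟨B, hB0, hB⟩ := (SchwartzMap.derivCLM ℝ ℝ f).exists_sq_le_mul_inv_one_add_sq
  refine ⟨4 * A + 6 * B, fun x y => ?_⟩
  set u := (1 + x ^ 2)⁻¹ with hu
  set v := (1 + y ^ 2)⁻¹ with hv
  set w := (1 + (x + y) ^ 2)⁻¹ with hw
  have hu0 : 0 < u := by positivity
  have hv0 : 0 < v := by positivity
  have hw0 : 0 < w := by positivity
  rcases eq_or_ne y 0 with rfl | hy
  · simp only [add_zero, sub_self]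
    norm_num
    positivity
  have hy2 : 0 < y ^ 2 := by positivity
  rcases le_total |y| 1 with h | h
  · have hy1 : y ^ 2 ≤ 1 := (sq_le_one_iff_abs_le_one y).2 h
    have hbound : |f (x + y) - f x| ≤ √(3 * B * u) * |y| := by
      have := (convex_uIcc x (x + y)).norm_image_sub_le_of_norm_deriv_le
        (f := f) (C := √(3 * B * u)) (fun z _ => f.differentiableAt) (fun z hz => ?_)
        Set.left_mem_uIcc Set.right_mem_uIcc
      · simpa using this
      · have hzx : |z - x| ≤ 1 := by
          have := Set.abs_sub_left_of_mem_uIcc hz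
          simp only [add_sub_cancel_left] at this
          exact this.trans h
        have hzx2 : (z - x) ^ 2 ≤ 1 := (sq_le_one_iff_abs_le_one _).2 hzx
        rw [Real.norm_eq_abs]
        apply Real.abs_le_sqrt
        have h1 := hB z
        rw [SchwartzMap.derivCLM_apply] at h1
        refine h1.trans ?_
        have h2 : (1 + z ^ 2)⁻¹ ≤ 3 * u := by
          rw [hu, ← div_eq_mul_inv, ← one_div, div_le_div_iff₀ (by positivity) (by positivity)]
          nlinarith [sq_nonneg (2 * z - x), sq_nonneg x]
        nlinarith
    have hsq : (f (x + y) - f x) ^ 2 ≤ 3 * B * u * y ^ 2 := by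
      have := pow_le_pow_left₀ (abs_nonneg _) hbound 2
      rwa [sq_abs, mul_pow, sq_abs, Real.sq_sqrt (by positivity)] at this
    have hv1 : 1 ≤ 2 * v := by
      rw [hv, ← div_eq_mul_inv, le_div_iff₀ (by positivity)]
      linarith
    calc (f (x + y) - f x) ^ 2 / y ^ 2 ≤ 3 * B * u := by rwa [div_le_iff₀ hy2]
      _ ≤ 3 * B * u * (2 * v) := le_mul_of_one_le_right (by positivity) hv1
      _ = 6 * B * (u * v) := by ring
      _ ≤ (4 * A + 6 * B) * (u * v + w * v) := by
        apply mul_le_mul <;> nlinarith [mul_pos hu0 hv0, mul_pos hw0 hv0]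
  · have hy1 : 1 ≤ y ^ 2 := (one_le_sq_iff_one_le_abs y).2 h
    have hv1 : (y ^ 2)⁻¹ ≤ 2 * v := by
      rw [hv, ← div_eq_mul_inv, ← one_div, div_le_div_iff₀ (by positivity) (by positivity)]
      linarith
    have hsq : (f (x + y) - f x) ^ 2 ≤ 2 * A * (u + w) := by
      nlinarith [hA x, hA (x + y), sq_nonneg (f (x + y) + f x)]
    calc (f (x + y) - f x) ^ 2 / y ^ 2 ≤ 2 * A * (u + w) * (2 * v) := by
          rw [div_eq_mul_inv]
          gcongr
      _ = 4 * A * (u * v + w * v) := by ring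
      _ ≤ (4 * A + 6 * B) * (u * v + w * v) := by
        gcongr
        linarith

/-- The `H^{1/2}` Gagliardo seminorm of a Schwartz function is finite. -/
lemma SchwartzMap.integrable_sq_sub_div_sq (f : SchwartzMap ℝ ℝ) :
    Integrable (fun p : ℝ × ℝ => (f (p.1 + p.2) - f p.1) ^ 2 / p.2 ^ 2) := by
  obtain ⟨C, hC⟩ := f.exists_sq_sub_div_sq_le
  have h1 : Integrable (fun p : ℝ × ℝ => (1 + p.1 ^ 2)⁻¹ * (1 + p.2 ^ 2)⁻¹) :=
    integrable_inv_one_add_sq.mul_prod integrable_inv_one_add_sq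
  have h2 : Integrable (fun p : ℝ × ℝ => (1 + (p.1 + p.2) ^ 2)⁻¹ * (1 + p.2 ^ 2)⁻¹) :=
    (measurePreserving_add_prod (volume : Measure ℝ) volume).integrable_comp_of_integrable h1
  refine ((h1.add h2).const_mul C).mono' ?_ (ae_of_all _ fun p => ?_)
  · have := f.continuous.measurable
    exact Measurable.aestronglyMeasurable (by fun_prop)
  · rw [Real.norm_of_nonneg (by positivity)]
    exact hC p.1 p.2

lemma sq_mul_cosh_div_sub_one (y l : ℝ) :
    l ^ 2 * (cosh (y / l) - 1) = 2 * (l * sinh (y / 2 / l)) ^ 2 := by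
  have h : y / l = 2 * (y / 2 / l) := by ring
  rw [h, cosh_two_mul, cosh_sq']
  ring

lemma tendsto_mul_sinh_div_atTop (a : ℝ) :
    Tendsto (fun l : ℝ => l * sinh (a / l)) atTop (nhds a) := by
  have h : HasDerivAt (fun s : ℝ => sinh (a * s)) a 0 := by
    simpa using ((hasDerivAt_id (0 : ℝ)).const_mul a).sinh
  simpa [Function.comp_def, div_eq_mul_inv] using
    h.tendsto_slope_zero_right.comp tendsto_inv_atTop_nhdsGT_zero

lemma sq_div_two_le_sq_mul_cosh_div_sub_one (y : ℝ) {l : ℝ} (hl : 0 < l) :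
    y ^ 2 / 2 ≤ l ^ 2 * (cosh (y / l) - 1) := by
  have h : |y / 2| ≤ |l * sinh (y / 2 / l)| := by
    rw [abs_mul, abs_sinh, abs_of_pos hl]
    calc |y / 2| = l * |y / 2 / l| := by rw [abs_div _ l, abs_of_pos hl]; field_simp
      _ ≤ l * sinh |y / 2 / l| := by
        gcongr
        exact self_le_sinh_iff.2 (abs_nonneg _)
  rw [sq_mul_cosh_div_sub_one]
  nlinarith [sq_le_sq.2 h]

theorem strip_jump_form_tendsto_cauchy_form (f : SchwartzMap ℝ ℝ) :
    Filter.Tendsto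
      (fun ℓ : ℝ =>
        ∫ y : ℝ, ∫ x : ℝ, (f (x + y) - f x) ^ 2 / (ℓ ^ 2 * (Real.cosh (y / ℓ) - 1)))
      Filter.atTop
      (nhds (2 * ∫ y : ℝ, ∫ x : ℝ, (f (x + y) - f x) ^ 2 / y ^ 2)) ∧
    MeasureTheory.Integrable
      (fun p : ℝ × ℝ => (f (p.1 + p.2) - f p.1) ^ 2 / p.2 ^ 2) := by
  have hint := f.integrable_sq_sub_div_sq
  refine ⟨?_, hint⟩
  let F : ℝ → ℝ × ℝ → ℝ := fun l p =>
    (f (p.1 + p.2) - f p.1) ^ 2 / (l ^ 2 * (cosh (p.2 / l) - 1))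
  have hmeas (l : ℝ) : AEStronglyMeasurable (F l) := by
    have := f.continuous.measurable
    exact Measurable.aestronglyMeasurable (by fun_prop)
  have hbound (l : ℝ) (hl : 0 < l) (p : ℝ × ℝ) :
      ‖F l p‖ ≤ 2 * ((f (p.1 + p.2) - f p.1) ^ 2 / p.2 ^ 2) := by
    have hk := sq_div_two_le_sq_mul_cosh_div_sub_one p.2 hl
    rw [Real.norm_of_nonneg (div_nonneg (sq_nonneg _) (le_trans (by positivity) hk))]
    rcases eq_or_ne p.2 0 with h | h
    · simp [h]
    calc F l p ≤ (f (p.1 + p.2) - f p.1) ^ 2 / (p.2 ^ 2 / 2) := by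
          dsimp only [F]
          gcongr
      _ = 2 * ((f (p.1 + p.2) - f p.1) ^ 2 / p.2 ^ 2) := by field_simp
  have hlim : Tendsto (fun l => ∫ p, F l p) atTop
      (nhds (∫ p : ℝ × ℝ, 2 * ((f (p.1 + p.2) - f p.1) ^ 2 / p.2 ^ 2))) := by
    refine tendsto_integral_filter_of_dominated_convergence _ (Eventually.of_forall hmeas)
      ((eventually_gt_atTop 0).mono fun l hl => ae_of_all _ (hbound l hl)) (hint.const_mul 2)
      (ae_of_all _ fun p => ?_)
    rcases eq_or_ne p.2 0 with h | h
    · simp [F, h]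
    have hne : 2 * (p.2 / 2) ^ 2 ≠ 0 := by positivity
    have := (tendsto_const_nhds (x := (f (p.1 + p.2) - f p.1) ^ 2)).div
      (((tendsto_mul_sinh_div_atTop (p.2 / 2)).pow 2).const_mul 2) hne
    simp only [F, sq_mul_cosh_div_sub_one]
    rw [show 2 * ((f (p.1 + p.2) - f p.1) ^ 2 / p.2 ^ 2) =
      (f (p.1 + p.2) - f p.1) ^ 2 / (2 * (p.2 / 2) ^ 2) by field_simp]
    exact this
  rw [integral_const_mul, Measure.volume_eq_prod, integral_prod_symm _ hint] at hlim
  refine hlim.congr' ((eventually_gt_atTop 0).mono fun l hl => ?_)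
  exact integral_prod_symm _ ((hint.const_mul 2).mono' (hmeas l) (ae_of_all _ (hbound l hl)))
end

section
/- There exists a sequence (u_n) of continuously differentiable, compactly supported functions u_n : ℝ² → ℝ such that 0 ≤ u_n(x) ≤ 1 for all x, u_n(x) → 1 as n → ∞ for every x ∈ ℝ², lim_{n→∞} ∫_{ℝ²} |∇u_n(x)|² dx = 0, and lim_{n→∞} ∫_{ℝ} (∂₁u_n(x₁, 0))² dx₁ = 0, where ∂₁u_n denotes the partial derivative of u_n in its first variable and |∇u_n|² the squared Euclidean norm of its gradient. -/
open Real MeasureTheory Filter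

namespace LogCutoff

/-- A smooth profile equal to `1` on `(-∞, 1]` and to `0` on `[2, ∞)`. -/
noncomputable def profile (t : ℝ) : ℝ := Real.smoothTransition (2 - t)

lemma contDiff_profile : ContDiff ℝ 1 profile :=
  Real.smoothTransition.contDiff.comp (contDiff_const.sub contDiff_id)

lemma profile_of_le_one {t : ℝ} (ht : t ≤ 1) : profile t = 1 :=
  Real.smoothTransition.one_of_one_le (by linarith)

lemma profile_of_two_le {t : ℝ} (ht : 2 ≤ t) : profile t = 0 :=
  Real.smoothTransition.zero_of_nonpos (by linarith)

lemma deriv_profile_of_two_lt {t : ℝ} (ht : 2 < t) : deriv profile t = 0 := by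
  have h : profile =ᶠ[nhds t] fun _ => 0 := by
    filter_upwards [lt_mem_nhds ht] with s hs using profile_of_two_le hs.le
  rw [h.deriv_eq, deriv_const]

lemma deriv_profile_of_lt_one {t : ℝ} (ht : t < 1) : deriv profile t = 0 := by
  have h : profile =ᶠ[nhds t] fun _ => 1 := by
    filter_upwards [gt_mem_nhds ht] with s hs using profile_of_le_one hs.le
  rw [h.deriv_eq, deriv_const]

lemma exists_deriv_profile_sq_le : ∃ C : ℝ, 0 ≤ C ∧ ∀ t, deriv profile t ^ 2 ≤ C := by
  have hc : Continuous (deriv profile) := contDiff_profile.continuous_deriv le_rfl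
  have hs : HasCompactSupport (deriv profile) := by
    refine HasCompactSupport.intro (K := Set.Icc 1 2) isCompact_Icc fun t ht => ?_
    rw [Set.mem_Icc, not_and_or, not_le, not_le] at ht
    exact ht.elim deriv_profile_of_lt_one deriv_profile_of_two_lt
  obtain ⟨C, hC⟩ := hs.exists_bound_of_continuous hc
  refine ⟨C ^ 2, sq_nonneg _, fun t => ?_⟩
  rw [← sq_abs]
  gcongr
  exact hC t

/-- The logarithmic cutoff at scale `a` in the plane. -/
noncomputable def cutoff (a : ℝ) (x : ℝ × ℝ) : ℝ :=
  profile (Real.log (1 + x.1 ^ 2 + x.2 ^ 2) / a)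

lemma contDiff_cutoff (a : ℝ) : ContDiff ℝ 1 (cutoff a) := by
  refine contDiff_profile.comp (ContDiff.div_const (ContDiff.log ?_ fun x => ?_) a)
  · fun_prop
  · positivity

lemma fderiv_cutoff (a : ℝ) (x v : ℝ × ℝ) :
    fderiv ℝ (cutoff a) x v =
      deriv profile (Real.log (1 + x.1 ^ 2 + x.2 ^ 2) / a) *
        ((2 * x.1 * v.1 + 2 * x.2 * v.2) / (1 + x.1 ^ 2 + x.2 ^ 2) / a) := by
  have hne : 1 + x.1 ^ 2 + x.2 ^ 2 ≠ 0 := by positivity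
  have h1 : HasFDerivAt (fun x : ℝ × ℝ => x.1) (ContinuousLinearMap.fst ℝ ℝ ℝ) x :=
    hasFDerivAt_fst
  have h2 : HasFDerivAt (fun x : ℝ × ℝ => x.2) (ContinuousLinearMap.snd ℝ ℝ ℝ) x :=
    hasFDerivAt_snd
  have hlog := ((((h1.pow 2).const_add 1).add (h2.pow 2)).log hne).mul_const a⁻¹
  have hp : HasDerivAt profile (deriv profile (Real.log (1 + x.1 ^ 2 + x.2 ^ 2) * a⁻¹))
      (Real.log (1 + x.1 ^ 2 + x.2 ^ 2) * a⁻¹) :=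
    (contDiff_profile.differentiable one_ne_zero _).hasDerivAt
  have h : HasFDerivAt (cutoff a) _ x := hp.comp_hasFDerivAt x hlog
  rw [h.fderiv]
  simp [div_eq_mul_inv]
  ring

lemma norm_le_exp_of_log_le {a : ℝ} {x : ℝ × ℝ}
    (h : Real.log (1 + x.1 ^ 2 + x.2 ^ 2) ≤ 2 * a) : ‖x‖ ≤ Real.exp a := by
  have hle : 1 + x.1 ^ 2 + x.2 ^ 2 ≤ Real.exp a ^ 2 := by
    rw [← Real.exp_nat_mul]
    exact (Real.log_le_iff_le_exp (by positivity)).1 h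
  rw [Prod.norm_def, max_le_iff]
  constructor <;> refine abs_le_of_sq_le_sq ?_ (Real.exp_pos a).le <;> nlinarith

lemma two_lt_of_exp_lt_norm {a : ℝ} (ha : 0 < a) {x : ℝ × ℝ} (h : Real.exp a < ‖x‖) :
    2 < Real.log (1 + x.1 ^ 2 + x.2 ^ 2) / a := by
  rw [lt_div_iff₀ ha]
  by_contra! hle
  exact absurd (norm_le_exp_of_log_le hle) h.not_ge

lemma hasCompactSupport_cutoff {a : ℝ} (ha : 0 < a) : HasCompactSupport (cutoff a) := by
  refine HasCompactSupport.intro (isCompact_closedBall (0 : ℝ × ℝ) (Real.exp a)) fun x hx => ?_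
  rw [mem_closedBall_zero_iff, not_le] at hx
  exact profile_of_two_le (two_lt_of_exp_lt_norm ha hx).le

lemma integral_div_one_add_sq_le {a : ℝ} (ha : 1 ≤ a) :
    ∫ y in (0 : ℝ)..Real.exp a, y / (1 + y ^ 2) ≤ 2 * a := by
  have hd : ∀ y ∈ Set.uIcc (0 : ℝ) (Real.exp a),
      HasDerivAt (fun y : ℝ => Real.log (1 + y ^ 2) / 2) (y / (1 + y ^ 2)) y := by
    intro y _
    have hne : 1 + y ^ 2 ≠ 0 := by positivity
    refine ((((hasDerivAt_pow 2 y).const_add 1).log hne).div_const 2).congr_deriv ?_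
    norm_num
    field_simp
  have hc : Continuous fun y : ℝ => y / (1 + y ^ 2) :=
    continuous_id.div (by fun_prop) fun y => by positivity
  rw [intervalIntegral.integral_eq_sub_of_hasDerivAt hd (hc.intervalIntegrable _ _)]
  have h2 : 2 ≤ Real.exp a := by linarith [Real.add_one_le_exp a]
  have hlog : Real.log (1 + Real.exp a ^ 2) ≤ 3 * a := by
    rw [Real.log_le_iff_le_exp (by positivity)]
    have : Real.exp (3 * a) = Real.exp a ^ 3 := by rw [← Real.exp_nat_mul]; norm_num
    rw [this]
    nlinarith [sq_nonneg (Real.exp a)]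
  simp
  linarith

lemma integral_closedBall_le {a : ℝ} (ha : 1 ≤ a) :
    ∫ x in Metric.closedBall (0 : ℝ × ℝ) (Real.exp a), 1 / (1 + ‖x‖ ^ 2) ≤ 16 * a := by
  have hind : ∫ x in Metric.closedBall (0 : ℝ × ℝ) (Real.exp a), 1 / (1 + ‖x‖ ^ 2) =
      ∫ x : ℝ × ℝ, (Set.Iic (Real.exp a)).indicator (fun r : ℝ => 1 / (1 + r ^ 2)) ‖x‖ := by
    rw [← integral_indicator Metric.isClosed_closedBall.measurableSet]
    congr with x
    by_cases hx : ‖x‖ ≤ Real.exp a <;> simp [hx]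
  have hball : (volume : Measure (ℝ × ℝ)).real (Metric.ball 0 1) = 4 := by
    rw [show (0 : ℝ × ℝ) = (0, 0) from rfl, ← ball_prod_same, Measure.volume_eq_prod,
      measureReal_prod_prod]
    simp [Real.volume_real_ball]
    norm_num
  have hradial : ∫ y in Set.Ioi (0 : ℝ),
      y * (Set.Iic (Real.exp a)).indicator (fun r : ℝ => 1 / (1 + r ^ 2)) y =
      ∫ y in (0 : ℝ)..Real.exp a, y / (1 + y ^ 2) := by
    rw [intervalIntegral.integral_of_le (Real.exp_pos a).le, ← Set.Ioi_inter_Iic,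
      ← setIntegral_indicator measurableSet_Iic]
    congr with y
    by_cases hy : y ∈ Set.Iic (Real.exp a) <;> simp [hy, div_eq_mul_inv]
  rw [hind, integral_fun_norm_addHaar]
  simp [hball, -one_div, hradial]
  linarith [integral_div_one_add_sq_le ha]

lemma gradient_sq_le {C a : ℝ} (hC : ∀ t, deriv profile t ^ 2 ≤ C) (hC0 : 0 ≤ C)
    (x : ℝ × ℝ) :
    fderiv ℝ (cutoff a) x (1, 0) ^ 2 + fderiv ℝ (cutoff a) x (0, 1) ^ 2 ≤
      4 * C / a ^ 2 * (1 / (1 + x.1 ^ 2 + x.2 ^ 2)) := by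
  have hpos : 0 < 1 + x.1 ^ 2 + x.2 ^ 2 := by positivity
  rw [fderiv_cutoff, fderiv_cutoff]
  calc _ = deriv profile (Real.log (1 + x.1 ^ 2 + x.2 ^ 2) / a) ^ 2 *
        (4 / a ^ 2 * ((x.1 ^ 2 + x.2 ^ 2) / (1 + x.1 ^ 2 + x.2 ^ 2) ^ 2)) := by
        simp only [mul_one, mul_zero, add_zero, zero_add]
        field_simp
        ring
    _ ≤ C * (4 / a ^ 2 * (1 / (1 + x.1 ^ 2 + x.2 ^ 2))) := by
        gcongr ?_ * (_ * ?_)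
        · exact hC _
        · rw [div_le_div_iff₀ (by positivity) hpos]
          nlinarith
    _ = _ := by ring

lemma integral_gradient_sq_le {C a : ℝ} (hC : ∀ t, deriv profile t ^ 2 ≤ C) (hC0 : 0 ≤ C)
    (ha : 1 ≤ a) :
    ∫ x : ℝ × ℝ, (fderiv ℝ (cutoff a) x (1, 0) ^ 2 + fderiv ℝ (cutoff a) x (0, 1) ^ 2) ≤
      64 * C / a := by
  have ha0 : 0 < a := by linarith
  rw [← setIntegral_eq_integral_of_forall_compl_eq_zero
    (s := Metric.closedBall (0 : ℝ × ℝ) (Real.exp a)) fun x hx => ?_]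
  · have hcont : Continuous fun x : ℝ × ℝ => 4 * C / a ^ 2 * (1 / (1 + ‖x‖ ^ 2)) :=
      continuous_const.mul (continuous_const.div (by fun_prop) fun x => by positivity)
    calc _ ≤ ∫ x in Metric.closedBall (0 : ℝ × ℝ) (Real.exp a),
          4 * C / a ^ 2 * (1 / (1 + ‖x‖ ^ 2)) := by
          refine integral_mono_of_nonneg (ae_of_all _ fun x => by positivity)
            (hcont.continuousOn.integrableOn_compact (isCompact_closedBall _ _))
            (ae_of_all _ fun x => (gradient_sq_le hC hC0 x).trans ?_)
          have hnorm : ‖x‖ ^ 2 ≤ x.1 ^ 2 + x.2 ^ 2 := by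
            rw [Prod.norm_def]
            rcases max_choice ‖x.1‖ ‖x.2‖ with h | h <;> rw [h, Real.norm_eq_abs, sq_abs] <;>
              nlinarith [sq_nonneg x.1, sq_nonneg x.2]
          dsimp only
          gcongr ?_ * (1 / ?_)
          linarith
      _ ≤ 4 * C / a ^ 2 * (16 * a) := by
          rw [integral_const_mul]
          gcongr
          exact integral_closedBall_le ha
      _ = 64 * C / a := by field_simp; ring
  · rw [mem_closedBall_zero_iff, not_le] at hx
    simp [fderiv_cutoff, deriv_profile_of_two_lt (two_lt_of_exp_lt_norm ha0 hx)]

lemma integral_axis_sq_le {C a : ℝ} (hC : ∀ t, deriv profile t ^ 2 ≤ C) (hC0 : 0 ≤ C)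
    (ha : 1 ≤ a) :
    ∫ x : ℝ, fderiv ℝ (cutoff a) (x, 0) (1, 0) ^ 2 ≤ 4 * C * π / a := by
  calc _ ≤ ∫ x : ℝ, 4 * C / a ^ 2 * (1 + x ^ 2)⁻¹ := by
        refine integral_mono_of_nonneg (ae_of_all _ fun x => by positivity)
          (integrable_inv_one_add_sq.const_mul _) (ae_of_all _ fun x => ?_)
        have h := gradient_sq_le (a := a) hC hC0 (x, 0)
        have h0 := sq_nonneg (fderiv ℝ (cutoff a) (x, 0) (0, 1))
        simp only [one_div, ne_eq, OfNat.ofNat_ne_zero, not_false_eq_true, zero_pow,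
          add_zero] at h
        dsimp only
        linarith
    _ = 4 * C * π / a ^ 2 := by
        rw [integral_const_mul, integral_univ_inv_one_add_sq]
        ring
    _ ≤ 4 * C * π / a := by
        gcongr
        nlinarith

end LogCutoff

open LogCutoff in
theorem exists_recurrence_sequence :
    ∃ u : ℕ → (ℝ × ℝ) → ℝ,
      (∀ n, ContDiff ℝ 1 (u n)) ∧
      (∀ n, HasCompactSupport (u n)) ∧
      (∀ n x, 0 ≤ u n x ∧ u n x ≤ 1) ∧
      (∀ x, Filter.Tendsto (fun n => u n x) Filter.atTop (nhds 1)) ∧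
      Filter.Tendsto
        (fun n => ∫ x : ℝ × ℝ,
          ((fderiv ℝ (u n) x (1, 0)) ^ 2 + (fderiv ℝ (u n) x (0, 1)) ^ 2))
        Filter.atTop (nhds 0) ∧
      Filter.Tendsto
        (fun n => ∫ x₁ : ℝ, (fderiv ℝ (u n) (x₁, 0) (1, 0)) ^ 2)
        Filter.atTop (nhds 0) := by
  obtain ⟨C, hC0, hC⟩ := exists_deriv_profile_sq_le
  have hscale : Tendsto (fun n : ℕ => (n : ℝ) + 1) atTop atTop :=
    tendsto_atTop_add_const_right _ _ tendsto_natCast_atTop_atTop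
  have hone : ∀ n : ℕ, (1 : ℝ) ≤ n + 1 := fun n => by simp
  refine ⟨fun n => cutoff (n + 1), fun n => contDiff_cutoff _,
    fun n => hasCompactSupport_cutoff (by positivity),
    fun n x => ⟨Real.smoothTransition.nonneg _, Real.smoothTransition.le_one _⟩,
    fun x => ?_, ?_, ?_⟩
  · refine tendsto_const_nhds.congr' ?_
    filter_upwards [hscale.eventually_ge_atTop (Real.log (1 + x.1 ^ 2 + x.2 ^ 2))] with n hn
    exact (profile_of_le_one ((div_le_one (by positivity)).2 hn)).symm
  · exact squeeze_zero (fun n => integral_nonneg fun x => by positivity)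
      (fun n => integral_gradient_sq_le hC hC0 (hone n)) (hscale.const_div_atTop _)
  · exact squeeze_zero (fun n => integral_nonneg fun x => by positivity)
      (fun n => integral_axis_sq_le hC hC0 (hone n)) (hscale.const_div_atTop _)
end
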